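/- Let n ≥ 5 be an integer and let p : ℤ/nℤ → ℝ satisfy p_i ≠ 0 for all i. Define x_i = (1 − p_i)/p_{i+1} and y_i = (1 − p_{i+1})/p_i for all i ∈ ℤ/nℤ. Then for every k with 1 ≤ k ≤ ⌊n/2⌋ one has O_k(x, y) = E_k(x, y). (This is the main theorem: for a twisted n-gon inscribed in a conic, parametrized by the cross-ratio coordinates p_i, the even and odd pentagram monodromy invariants coincide.) -/

import Mathlib

/-!
Monodromy invariants `O_k`, `E_k` of the pentagram map (combinatorial definition),
and the main theorem: for a twisted `n`-gon inscribed in a conic, parametrized by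
the cross-ratio coordinates `p_i`, one has `O_k = E_k` for `1 ≤ k ≤ ⌊n/2⌋`.

Two monomials are *consecutive* if they involve consecutive or coinciding variables.
For the `O`-side monomials `x_i` and `X_i = x_i y_i x_{i+1}` this gives:
`X_i, X_j` consecutive iff `j ∈ {i-2,…,i+2}`; `X_i, x_j` consecutive iff
`j ∈ {i-1,…,i+2}`; `x_i, x_j` consecutive iff `j ∈ {i-1,i,i+1}`.
For the `E`-side monomials `y_i` and `Y_j = y_{j-1} x_j y_j` (so `Y_j` involves the
variables `y_{j-1}, y_j`) the same notion gives: `Y_i, Y_j` consecutive iff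
`j ∈ {i-2,…,i+2}`; `Y_i, y_j` consecutive iff `j ∈ {i-2,…,i+1}`; `y_i, y_j`
consecutive iff `j ∈ {i-1,i,i+1}`.
-/

open scoped Classical

noncomputable section

/-- The monomial `X_i = x_i · y_i · x_{i+1}`. -/
def Xmon {R : Type*} [CommRing R] {n : ℕ} (x y : ZMod n → R) (i : ZMod n) : R :=
  x i * y i * x (i + 1)

/-- The monomial `Y_j = y_{j-1} · x_j · y_j`. -/
def Ymon {R : Type*} [CommRing R] {n : ℕ} (x y : ZMod n → R) (j : ZMod n) : R :=
  y (j - 1) * x j * y j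

/-- Admissibility of a product of the monomials `X_i` (`i ∈ S`) and `x_j` (`j ∈ T`):
no two of the factors are consecutive. -/
def AdmissibleO {n : ℕ} (S T : Finset (ZMod n)) : Prop :=
  (∀ i ∈ S, ∀ j ∈ S, i ≠ j → j ∉ ({i - 2, i - 1, i, i + 1, i + 2} : Finset (ZMod n))) ∧
  (∀ i ∈ S, ∀ j ∈ T, j ∉ ({i - 1, i, i + 1, i + 2} : Finset (ZMod n))) ∧
  (∀ i ∈ T, ∀ j ∈ T, i ≠ j → j ∉ ({i - 1, i, i + 1} : Finset (ZMod n)))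

/-- Admissibility of a product of the monomials `Y_i` (`i ∈ S`) and `y_j` (`j ∈ T`):
no two of the factors are consecutive (`Y_i` involves the variables `y_{i-1}, y_i`). -/
def AdmissibleE {n : ℕ} (S T : Finset (ZMod n)) : Prop :=
  (∀ i ∈ S, ∀ j ∈ S, i ≠ j → j ∉ ({i - 2, i - 1, i, i + 1, i + 2} : Finset (ZMod n))) ∧
  (∀ i ∈ S, ∀ j ∈ T, j ∉ ({i - 2, i - 1, i, i + 1} : Finset (ZMod n))) ∧
  (∀ i ∈ T, ∀ j ∈ T, i ≠ j → j ∉ ({i - 1, i, i + 1} : Finset (ZMod n)))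

/-- The finset of all residues mod `n` (for `n ≥ 1`). -/
def allRes (n : ℕ) : Finset (ZMod n) := (Finset.range n).image (Nat.cast)

/-- The monodromy invariant `O_k = ∑_{|O|=k} sign(O)·O`, the sum over all admissible
products `O = X_{i_1}⋯X_{i_s}·x_{j_1}⋯x_{j_t}` of weight `s + t = k`, with
sign `(-1)^s`. -/
def Opoly {R : Type*} [CommRing R] {n : ℕ} (x y : ZMod n → R) (k : ℕ) : R :=
  ∑ S ∈ (allRes n).powerset, ∑ T ∈ (allRes n).powerset,
    if AdmissibleO S T ∧ S.card + T.card = k then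
      (-1 : R) ^ S.card * (∏ i ∈ S, Xmon x y i) * ∏ j ∈ T, x j
    else 0

/-- The monodromy invariant `E_k`, built from the monomials `Y_i` and `y_j` by the
same recipe. -/
def Epoly {R : Type*} [CommRing R] {n : ℕ} (x y : ZMod n → R) (k : ℕ) : R :=
  ∑ S ∈ (allRes n).powerset, ∑ T ∈ (allRes n).powerset,
    if AdmissibleE S T ∧ S.card + T.card = k then
      (-1 : R) ^ S.card * (∏ i ∈ S, Ymon x y i) * ∏ j ∈ T, y j
    else 0

lemma sum_powerset_eq_sum_ite {α M : Type*} [Fintype α] [DecidableEq α]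
    [AddCommMonoid M] (X : Finset α)
    (f : Finset α → M) : ∑ B ∈ X.powerset, f B = ∑ B, if B ⊆ X then f B else 0 := by
  rw [← Finset.sum_filter]
  exact Finset.sum_congr (by ext; simp) fun _ _ => rfl

section Circle

variable {A : Type*} [AddCommGroup A]

/-- Admissibility for blocks `{i, i + e}` with `i ∈ S` and singletons `{j}` with `j ∈ T`
on the cycles of translation by `e`. -/
def StepAdmissible (e : A) (S T : Finset A) : Prop :=
  (∀ i ∈ S, i + e ∉ S ∧ i + e + e ∉ S) ∧
  (∀ i ∈ S, i - e ∉ T ∧ i ∉ T ∧ i + e ∉ T ∧ i + e + e ∉ T) ∧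
  (∀ i ∈ T, i + e ∉ T)

/-- Pairwise form of admissibility. -/
lemma stepAdmissible_iff {e : A} (he : e ≠ 0) (he' : e + e ≠ 0) {S T : Finset A} :
    StepAdmissible e S T ↔
      (∀ i ∈ S, ∀ j ∈ S, i ≠ j →
        j ≠ i - e - e ∧ j ≠ i - e ∧ j ≠ i ∧ j ≠ i + e ∧ j ≠ i + e + e) ∧
      (∀ i ∈ S, ∀ j ∈ T, j ≠ i - e ∧ j ≠ i ∧ j ≠ i + e ∧ j ≠ i + e + e) ∧
      (∀ i ∈ T, ∀ j ∈ T, i ≠ j → j ≠ i - e ∧ j ≠ i ∧ j ≠ i + e) := by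
  refine and_congr ⟨fun h i hi j hj hij => ?_, fun h i hi => ?_⟩ (and_congr
    ⟨fun h i hi j hj => ?_, fun h i hi => ?_⟩ ⟨fun h i hi j hj hij => ?_, fun h i hi hi' => ?_⟩)
  · refine ⟨?_, ?_, hij.symm, ?_, ?_⟩ <;> rintro rfl
    · exact (h _ hj).2 (by simpa using hi)
    · exact (h _ hj).1 (by simpa using hi)
    · exact (h _ hi).1 hj
    · exact (h _ hi).2 hj
  · refine ⟨fun hi' => ?_, fun hi' => ?_⟩
    · exact (h i hi _ hi' (by simpa using he)).2.2.2.1 rfl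
    · exact (h i hi _ hi' (by simpa [add_assoc] using he')).2.2.2.2 rfl
  · have := h i hi
    refine ⟨?_, ?_, ?_, ?_⟩ <;> rintro rfl <;> tauto
  · exact ⟨fun hi' => (h i hi _ hi').1 rfl, fun hi' => (h i hi _ hi').2.1 rfl,
      fun hi' => (h i hi _ hi').2.2.1 rfl, fun hi' => (h i hi _ hi').2.2.2 rfl⟩
  · refine ⟨?_, hij.symm, ?_⟩ <;> rintro rfl
    · exact h _ hj (by simpa using hi)
    · exact h _ hi hj
  · exact (h i hi _ hi' (by simpa using he)).2.2 rfl

lemma stepAdmissible_map_addRight {e a : A} {S T : Finset A} :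
    StepAdmissible e (S.map (Equiv.addRight a).toEmbedding)
      (T.map (Equiv.addRight a).toEmbedding) ↔ StepAdmissible e S T := by
  have h (i : A) (U : Finset A) :
      i ∈ U.map (Equiv.addRight a).toEmbedding ↔ i - a ∈ U := by
    simp [sub_eq_add_neg]
  have e₁ (i : A) : i + a + e - a = i + e := by abel
  have e₂ (i : A) : i + a + e + e - a = i + e + e := by abel
  have e₃ (i : A) : i + a - e - a = i - e := by abel
  simp only [StepAdmissible, Finset.forall_mem_map, Equiv.coe_toEmbedding, Equiv.coe_addRight]
  simp only [h, e₁, e₂, e₃, add_sub_cancel_right]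

/-- `D` is disjoint from `U` and has no neighbour in `U ∪ D`. -/
def IsolatedFrom (e : A) (U D : Finset A) : Prop :=
  Disjoint U D ∧ ∀ i ∈ D, (i + e ∉ U ∧ i + e ∉ D) ∧ (i - e ∉ U ∧ i - e ∉ D)

lemma IsolatedFrom.neg_iff {e : A} {U D : Finset A} :
    IsolatedFrom (-e) U D ↔ IsolatedFrom e U D := by
  simp only [IsolatedFrom, sub_neg_eq_add, ← sub_eq_add_neg]
  exact and_congr_right fun _ => forall₂_congr fun _ _ => and_comm

variable [DecidableEq A]

/-- The last sites of the runs of `U`. -/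
def runEnds (e : A) (U : Finset A) : Finset A := U.filter fun i => i + e ∉ U

lemma card_runEnds_neg (e : A) (U : Finset A) :
    (runEnds (-e) U).card = (runEnds e U).card := by
  have key : (U.filter fun i => i + -e ∈ U).card = (U.filter fun i => i + e ∈ U).card := by
    refine Finset.card_nbij' (· + -e) (· + e) ?_ ?_ ?_ ?_ <;> intro i <;> simp <;> tauto
  have h₁ := Finset.card_filter_add_card_filter_not (s := U) (fun i => i + -e ∈ U)
  have h₂ := Finset.card_filter_add_card_filter_not (s := U) (fun i => i + e ∈ U)
  simp only [runEnds]
  omega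

variable [Fintype A]

/-- The translate `S + e`. -/
def shiftBy (e : A) (S : Finset A) : Finset A := Finset.univ.filter fun i => i - e ∈ S

lemma mem_shiftBy {e i : A} {S : Finset A} : i ∈ shiftBy e S ↔ i - e ∈ S := by
  simp [shiftBy]

lemma shiftBy_eq_map (e : A) (S : Finset A) :
    shiftBy e S = S.map (Equiv.addRight e).toEmbedding := by
  ext i
  simp [mem_shiftBy, sub_eq_add_neg]

lemma prod_shiftBy {M : Type*} [CommMonoid M] (e : A) (S : Finset A) (f : A → M) :
    ∏ i ∈ shiftBy e S, f i = ∏ i ∈ S, f (i + e) := by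
  simp [shiftBy_eq_map]

lemma card_shiftBy (e : A) (S : Finset A) : (shiftBy e S).card = S.card := by
  simp [shiftBy_eq_map]

/-- The sites covered neither by a block or singleton nor by the gap following it. -/
def freeSites (e : A) (S T : Finset A) : Finset A :=
  Finset.univ \ (S ∪ shiftBy e S ∪ shiftBy e (shiftBy e S) ∪ T ∪ shiftBy e T)

/-- The sites `B`, `C`, `D` are pairwise disjoint, and each site of `C ∪ D` is followed by
an unoccupied one. -/
def IsLabelling (e : A) (B C D : Finset A) : Prop :=
  Disjoint B C ∧ Disjoint B D ∧ Disjoint C D ∧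
    ∀ i, i ∈ C ∨ i ∈ D → i + e ∉ B ∧ i + e ∉ C ∧ i + e ∉ D

section Weights

variable {K : Type*} [Field K]

/-- The signed sum over admissible products of weight `k`, with the monomials written in
terms of `p`. -/
def stepSum (e : A) (p : A → K) (k : ℕ) : K :=
  ∑ S : Finset A, ∑ T : Finset A,
    if StepAdmissible e S T ∧ S.card + T.card = k then
      (-1 : K) ^ S.card *
        (∏ i ∈ S, (1 - p i) * (1 - p (i + e)) ^ 2 / (p i * p (i + e) * p (i + e + e))) *
        ∏ j ∈ T, (1 - p j) / p (j + e)
    else 0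

/-- The expansion of the cleared `stepSum` in the variables `1 - p i`. -/
def runSum (e : A) (p : A → K) (k : ℕ) : K :=
  ∑ U : Finset A, ∑ D : Finset A,
    if IsolatedFrom e U D ∧ D.card ≤ k then
      ((runEnds e U).card.choose (k - D.card) : K) * (-1) ^ (U.card + k) *
        (∏ i ∈ U, (1 - p i)) * ∏ i ∈ D, (1 - p i) ^ 2
    else 0

lemma runSum_neg (e : A) (p : A → K) (k : ℕ) : runSum (-e) p k = runSum e p k := by
  simp only [runSum, IsolatedFrom.neg_iff, card_runEnds_neg]

lemma prod_univ_eq_of_stepAdmissible {M : Type*} [CommMonoid M] {e : A}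
    {S T : Finset A} (h : StepAdmissible e S T) (p : A → M) :
    ∏ i, p i = (∏ i ∈ S, p i * p (i + e) * p (i + e + e)) *
      (∏ j ∈ T, p j * p (j + e)) * ∏ i ∈ freeSites e S T, p i := by
  obtain ⟨hSS, hST, hTT⟩ := h
  have d₁ : Disjoint S (shiftBy e S) := by
    rw [Finset.disjoint_left]
    intro i hi hi'
    have := hSS _ (mem_shiftBy.1 hi')
    simp_all
  have d₂ : Disjoint (S ∪ shiftBy e S) (shiftBy e (shiftBy e S)) := by
    rw [Finset.disjoint_left]
    intro i hi hi'
    have := hSS _ (mem_shiftBy.1 (mem_shiftBy.1 hi'))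
    simp_all [mem_shiftBy]
  have d₃ : Disjoint (S ∪ shiftBy e S ∪ shiftBy e (shiftBy e S)) T := by
    rw [Finset.disjoint_left]
    intro i hi hi'
    simp only [Finset.mem_union, mem_shiftBy] at hi
    rcases hi with (hi | hi) | hi <;> have := hST _ hi <;> simp_all
  have d₄ : Disjoint (S ∪ shiftBy e S ∪ shiftBy e (shiftBy e S) ∪ T)
      (shiftBy e T) := by
    rw [Finset.disjoint_left]
    intro i hi hi'
    simp only [Finset.mem_union, mem_shiftBy] at hi hi'
    rcases hi with ((hi | hi) | hi) | hi
    · exact (hST _ hi).1 hi'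
    · exact (hST _ hi).2.1 hi'
    · have := (hST _ hi).2.2.1
      simp_all
    · have := hTT _ hi'
      simp_all
  rw [freeSites, ← Finset.prod_sdiff (Finset.subset_univ
      (S ∪ shiftBy e S ∪ shiftBy e (shiftBy e S) ∪ T ∪ shiftBy e T)),
    Finset.prod_union d₄, Finset.prod_union d₃, Finset.prod_union d₂, Finset.prod_union d₁]
  simp only [prod_shiftBy, Finset.prod_mul_distrib]
  ac_rfl

/-- Each admissible term, cleared of denominators and expanded in the variables `1 - p i`. -/
lemma prod_mul_stepTerm {e : A} {p : A → K}
    (hp : ∀ i, p i ≠ 0) {S T : Finset A} (h : StepAdmissible e S T) :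
    (∏ i, p i) * ((-1 : K) ^ S.card *
        (∏ i ∈ S, (1 - p i) * (1 - p (i + e)) ^ 2 / (p i * p (i + e) * p (i + e + e))) *
        ∏ j ∈ T, (1 - p j) / p (j + e)) =
      ∑ B ∈ (freeSites e S T).powerset, ∑ D ∈ T.powerset,
        (-1 : K) ^ S.card * (∏ i ∈ S, (1 - p i) * (1 - p (i + e)) ^ 2) *
          ((∏ i ∈ D, -(1 - p i) ^ 2) * ∏ i ∈ T \ D, (1 - p i)) * ∏ i ∈ B, -(1 - p i) := by
  have hfree : ∏ i ∈ freeSites e S T, p i =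
      ∑ B ∈ (freeSites e S T).powerset, ∏ i ∈ B, -(1 - p i) := by
    rw [← Finset.prod_add_one]
    exact Finset.prod_congr rfl fun i _ => by ring
  have hT : ∏ j ∈ T, (1 - p j) * p j =
      ∑ D ∈ T.powerset, (∏ i ∈ D, -(1 - p i) ^ 2) * ∏ i ∈ T \ D, (1 - p i) := by
    rw [← Finset.prod_add]
    exact Finset.prod_congr rfl fun i _ => by ring
  have hS₁ : (∏ i ∈ S, p i * p (i + e) * p (i + e + e)) *
      (∏ i ∈ S, (1 - p i) * (1 - p (i + e)) ^ 2 / (p i * p (i + e) * p (i + e + e))) =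
      ∏ i ∈ S, (1 - p i) * (1 - p (i + e)) ^ 2 := by
    rw [← Finset.prod_mul_distrib]
    refine Finset.prod_congr rfl fun i _ => ?_
    have := hp i
    have := hp (i + e)
    have := hp (i + e + e)
    field_simp
  have hT₁ : (∏ j ∈ T, p j * p (j + e)) * (∏ j ∈ T, (1 - p j) / p (j + e)) =
      ∏ j ∈ T, (1 - p j) * p j := by
    rw [← Finset.prod_mul_distrib]
    refine Finset.prod_congr rfl fun i _ => ?_
    have := hp (i + e)
    field_simp
  simp only [← Finset.mul_sum, ← Finset.sum_mul]
  rw [← hfree, ← hT, prod_univ_eq_of_stepAdmissible h, ← hS₁, ← hT₁]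
  ring

/-- The common weight of a labelling. -/
def labelWeight (p : A → K) (B C D : Finset A) : K :=
  (-1) ^ (B.card + D.card) * (∏ i ∈ B, (1 - p i)) * (∏ i ∈ C, (1 - p i)) *
    ∏ i ∈ D, (1 - p i) ^ 2

/-- The sites of `B` immediately followed by a site of `D`. -/
def followed (e : A) (B D : Finset A) : Finset A := B.filter fun i => i + e ∈ D

lemma prod_mul_stepSum_eq_sum_labelling {e : A} {p : A → K} (hp : ∀ i, p i ≠ 0) (k : ℕ) :
    (∏ i, p i) * stepSum e p k = ∑ B : Finset A, ∑ C : Finset A, ∑ D : Finset A,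
      if IsLabelling e B C D ∧ C.card + D.card = k then
        ∑ S ∈ (followed e B D).powerset, (-1) ^ S.card * labelWeight p B C D
      else 0 := by
  have hl : (∏ i, p i) * stepSum e p k =
      ∑ q : Finset A × Finset A × Finset A × Finset A with
        (StepAdmissible e q.1 q.2.1 ∧ q.1.card + q.2.1.card = k) ∧
          q.2.2.1 ⊆ freeSites e q.1 q.2.1 ∧ q.2.2.2 ⊆ q.2.1,
        (-1 : K) ^ q.1.card * (∏ i ∈ q.1, (1 - p i) * (1 - p (i + e)) ^ 2) *
          ((∏ i ∈ q.2.2.2, -(1 - p i) ^ 2) * ∏ i ∈ q.2.1 \ q.2.2.2, (1 - p i)) *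
            ∏ i ∈ q.2.2.1, -(1 - p i) := by
    simp only [Finset.sum_filter, Fintype.sum_prod_type, stepSum, Finset.mul_sum, ite_and]
    refine Finset.sum_congr rfl fun S _ => Finset.sum_congr rfl fun T _ => ?_
    by_cases h : StepAdmissible e S T
    · by_cases h' : S.card + T.card = k
      · simp only [h, h', if_true, prod_mul_stepTerm hp h, sum_powerset_eq_sum_ite]
        refine Finset.sum_congr rfl fun B _ => ?_
        split_ifs <;> simp
      · simp [h']
    · simp [h]
  have hr : (∑ B : Finset A, ∑ C : Finset A, ∑ D : Finset A,
      if IsLabelling e B C D ∧ C.card + D.card = k then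
        ∑ S ∈ (followed e B D).powerset, (-1) ^ S.card * labelWeight p B C D
      else 0) =
      ∑ q : Finset A × Finset A × Finset A × Finset A with
        (IsLabelling e q.1 q.2.1 q.2.2.1 ∧ q.2.1.card + q.2.2.1.card = k) ∧
          q.2.2.2 ⊆ followed e q.1 q.2.2.1,
        (-1) ^ q.2.2.2.card * labelWeight p q.1 q.2.1 q.2.2.1 := by
    simp only [Finset.sum_filter, Fintype.sum_prod_type, sum_powerset_eq_sum_ite]
    refine Finset.sum_congr rfl fun B _ => Finset.sum_congr rfl fun C _ =>
      Finset.sum_congr rfl fun D _ => ?_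
    split_ifs with h <;> simp [h]
  rw [hl, hr]
  clear hl hr
  refine Finset.sum_nbij'
    (fun q => (q.2.2.1 ∪ q.1, q.2.1 \ q.2.2.2, q.2.2.2 ∪ shiftBy e q.1, q.1))
    (fun q => (q.2.2.2, q.2.1 ∪ (q.2.2.1 \ shiftBy e q.2.2.2), q.1 \ q.2.2.2,
      q.2.2.1 \ shiftBy e q.2.2.2)) ?_ ?_ ?_ ?_ ?_
  · rintro ⟨S, T, B, D⟩ h
    simp only [Finset.mem_filter_univ] at h ⊢
    obtain ⟨⟨⟨hSS, hST, hTT⟩, hk⟩, hB, hD⟩ := h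
    have hB' : ∀ i ∈ B, i ∉ S ∧ i - e ∉ S ∧ i - e - e ∉ S ∧ i ∉ T ∧ i - e ∉ T := by
      intro i hi
      simpa [freeSites, mem_shiftBy, and_assoc] using hB hi
    refine ⟨⟨⟨?_, ?_, ?_, ?_⟩, ?_⟩, ?_⟩
    · grind [Finset.disjoint_left, sub_add_cancel, add_sub_cancel_right]
    · grind [Finset.disjoint_left, mem_shiftBy, sub_add_cancel, add_sub_cancel_right]
    · grind [Finset.disjoint_left, mem_shiftBy, sub_add_cancel, add_sub_cancel_right]
    · grind [mem_shiftBy, sub_add_cancel, add_sub_cancel_right]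
    · have hd : Disjoint D (shiftBy e S) := by
        grind [Finset.disjoint_left, mem_shiftBy, sub_add_cancel, add_sub_cancel_right]
      rw [Finset.card_union_of_disjoint hd, card_shiftBy]
      have := Finset.card_sdiff_add_card_eq_card hD
      omega
    · grind [followed, mem_shiftBy, sub_add_cancel, add_sub_cancel_right]
  · rintro ⟨B, C, D, S⟩ h
    simp only [Finset.mem_filter_univ] at h ⊢
    obtain ⟨⟨⟨hBC, hBD, hCD, hgap⟩, hk⟩, hS⟩ := h
    have hS' : ∀ i ∈ S, i ∈ B ∧ i + e ∈ D := fun i hi => by simpa [followed] using hS hi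
    rw [Finset.disjoint_left] at hBC hBD hCD
    refine ⟨⟨⟨?_, ?_, ?_⟩, ?_⟩, ?_, ?_⟩
    · grind [sub_add_cancel, add_sub_cancel_right]
    · grind [mem_shiftBy, sub_add_cancel, add_sub_cancel_right]
    · grind [mem_shiftBy, sub_add_cancel, add_sub_cancel_right]
    · have hd : Disjoint C (D \ shiftBy e S) := by
        grind [Finset.disjoint_left, sub_add_cancel, add_sub_cancel_right]
      have hs : shiftBy e S ⊆ D := by grind [mem_shiftBy, sub_add_cancel, add_sub_cancel_right]
      rw [Finset.card_union_of_disjoint hd]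
      have := Finset.card_sdiff_add_card_eq_card hs
      rw [card_shiftBy] at this
      omega
    · intro i hi
      simp only [freeSites, Finset.mem_sdiff, Finset.mem_union, mem_shiftBy, Finset.mem_univ] at *
      grind [sub_add_cancel, add_sub_cancel_right]
    · exact Finset.subset_union_right
  · rintro ⟨S, T, B, D⟩ h
    simp only [Finset.mem_filter_univ] at h
    obtain ⟨⟨⟨hSS, hST, hTT⟩, hk⟩, hB, hD⟩ := h
    have hBS : Disjoint B S := by
      rw [Finset.disjoint_left]
      intro i hi
      have := hB hi
      simp_all [freeSites]
    have hDS : Disjoint D (shiftBy e S) := by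
      grind [Finset.disjoint_left, mem_shiftBy, sub_add_cancel, add_sub_cancel_right]
    simp only [Finset.union_sdiff_cancel_right hDS, Finset.union_sdiff_cancel_right hBS,
      Finset.sdiff_union_of_subset hD]
  · rintro ⟨B, C, D, S⟩ h
    simp only [Finset.mem_filter_univ] at h
    obtain ⟨⟨⟨hBC, hBD, hCD, hgap⟩, hk⟩, hS⟩ := h
    have hSB : S ⊆ B := hS.trans (Finset.filter_subset _ _)
    have hSD : shiftBy e S ⊆ D := by
      grind [mem_shiftBy, followed, sub_add_cancel, add_sub_cancel_right]
    have hCD' : Disjoint C (D \ shiftBy e S) := hCD.mono_right Finset.sdiff_subset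
    simp only [Finset.union_sdiff_cancel_right hCD', Finset.sdiff_union_of_subset hSB,
      Finset.sdiff_union_of_subset hSD]
  · rintro ⟨S, T, B, D⟩ h
    simp only [Finset.mem_filter_univ] at h
    obtain ⟨⟨⟨hSS, hST, hTT⟩, hk⟩, hB, hD⟩ := h
    have hBS : Disjoint B S := by
      rw [Finset.disjoint_left]
      intro i hi
      have := hB hi
      simp_all [freeSites]
    have hDS : Disjoint D (shiftBy e S) := by
      grind [Finset.disjoint_left, mem_shiftBy, sub_add_cancel, add_sub_cancel_right]
    simp only [labelWeight, Finset.prod_union hBS, Finset.prod_union hDS,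
      Finset.card_union_of_disjoint hBS, Finset.card_union_of_disjoint hDS, card_shiftBy,
      prod_shiftBy, Finset.prod_neg, Finset.prod_mul_distrib]
    have hsq : ((-1 : K) ^ S.card) ^ 2 = 1 := by rw [← pow_mul, mul_comm, pow_mul]; simp
    simp only [pow_add]
    linear_combination (-(-1) ^ S.card * (-1) ^ B.card * (-1) ^ D.card * (∏ i ∈ S, (1 - p i)) *
      (∏ i ∈ S, (1 - p (i + e)) ^ 2) * (∏ i ∈ D, (1 - p i) ^ 2) *
      (∏ i ∈ T \ D, (1 - p i)) * ∏ i ∈ B, (1 - p i)) * hsq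

lemma sum_labelling_eq_runSum (e : A) (p : A → K) (k : ℕ) :
    (∑ B : Finset A, ∑ C : Finset A, ∑ D : Finset A,
      if IsLabelling e B C D ∧ C.card + D.card = k then
        ∑ S ∈ (followed e B D).powerset, (-1) ^ S.card * labelWeight p B C D
      else 0) = runSum e p k := by
  have hsum (X : Finset A) : ∑ S ∈ X.powerset, (-1 : K) ^ S.card = if X = ∅ then 1 else 0 := by
    exact_mod_cast congrArg (Int.cast : ℤ → K) (Finset.sum_powerset_neg_one_pow_card (x := X))
  have hl : (∑ B : Finset A, ∑ C : Finset A, ∑ D : Finset A,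
      if IsLabelling e B C D ∧ C.card + D.card = k then
        ∑ S ∈ (followed e B D).powerset, (-1) ^ S.card * labelWeight p B C D
      else 0) =
      ∑ q : Finset A × Finset A × Finset A with
        (IsLabelling e q.1 q.2.1 q.2.2 ∧ q.2.1.card + q.2.2.card = k) ∧
          followed e q.1 q.2.2 = ∅, labelWeight p q.1 q.2.1 q.2.2 := by
    simp only [Finset.sum_filter, Fintype.sum_prod_type, ← Finset.sum_mul, hsum, ite_and,
      ite_mul, one_mul, zero_mul]
  have hr : runSum e p k = ∑ q : Finset A × Finset A × Finset A with
      (IsolatedFrom e q.1 q.2.1 ∧ q.2.1.card ≤ k) ∧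
        q.2.2 ∈ (runEnds e q.1).powersetCard (k - q.2.1.card),
      (-1) ^ (q.1.card + k) * (∏ i ∈ q.1, (1 - p i)) * ∏ i ∈ q.2.1, (1 - p i) ^ 2 := by
    simp only [Finset.sum_filter, Fintype.sum_prod_type, runSum]
    refine Finset.sum_congr rfl fun U _ => Finset.sum_congr rfl fun D _ => ?_
    split_ifs with h
    · simp only [h, true_and, and_self, ← Finset.sum_filter, Finset.filter_univ_mem,
        Finset.sum_const, Finset.card_powersetCard, nsmul_eq_mul, mul_assoc]
    · simp [h]
  rw [hl, hr]
  clear hl hr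
  refine Finset.sum_nbij' (fun q => (q.1 ∪ q.2.1, q.2.2, q.2.1))
    (fun q => (q.1 \ q.2.2, q.2.2, q.2.1)) ?_ ?_ ?_ ?_ ?_
  · rintro ⟨B, C, D⟩ h
    simp only [Finset.mem_filter_univ, Finset.mem_powersetCard] at h ⊢
    obtain ⟨⟨⟨hBC, hBD, hCD, hgap⟩, hk⟩, hf⟩ := h
    have hf' : ∀ i ∈ B, i + e ∉ D := by simpa [followed, Finset.filter_eq_empty_iff] using hf
    rw [Finset.disjoint_left] at hBC hBD hCD
    refine ⟨⟨⟨?_, ?_⟩, by omega⟩, ?_, by omega⟩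
    · grind [Finset.disjoint_left, sub_add_cancel, add_sub_cancel_right]
    · grind [sub_add_cancel, add_sub_cancel_right]
    · grind [runEnds, sub_add_cancel, add_sub_cancel_right]
  · rintro ⟨U, D, C⟩ h
    simp only [Finset.mem_filter_univ, Finset.mem_powersetCard] at h ⊢
    obtain ⟨⟨⟨hUD, hD⟩, hk⟩, hC, hcard⟩ := h
    have hC' : ∀ i ∈ C, i ∈ U ∧ i + e ∉ U := fun i hi => by simpa [runEnds] using hC hi
    rw [Finset.disjoint_left] at hUD
    refine ⟨⟨⟨Finset.sdiff_disjoint, ?_, ?_, ?_⟩, by omega⟩, ?_⟩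
    · grind [Finset.disjoint_left, sub_add_cancel, add_sub_cancel_right]
    · grind [Finset.disjoint_left, sub_add_cancel, add_sub_cancel_right]
    · grind [sub_add_cancel, add_sub_cancel_right]
    · simp only [followed, Finset.filter_eq_empty_iff]
      grind [sub_add_cancel, add_sub_cancel_right]
  · rintro ⟨B, C, D⟩ h
    simp only [Finset.mem_filter_univ] at h
    simp only [Finset.union_sdiff_cancel_right h.1.1.1]
  · rintro ⟨U, D, C⟩ h
    simp only [Finset.mem_filter_univ, Finset.mem_powersetCard] at h
    simp only [Finset.sdiff_union_of_subset (h.2.1.trans (Finset.filter_subset _ _))]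
  · rintro ⟨B, C, D⟩ h
    simp only [Finset.mem_filter_univ] at h
    obtain ⟨⟨⟨hBC, -⟩, hk⟩, -⟩ := h
    have hsq : ((-1 : K) ^ C.card) ^ 2 = 1 := by rw [← pow_mul, mul_comm, pow_mul]; simp
    simp only [labelWeight, Finset.prod_union hBC, Finset.card_union_of_disjoint hBC, ← hk, pow_add]
    linear_combination (-(-1) ^ B.card * (-1) ^ D.card * (∏ i ∈ B, (1 - p i)) *
      (∏ i ∈ C, (1 - p i)) * ∏ i ∈ D, (1 - p i) ^ 2) * hsq

lemma prod_mul_stepSum {e : A} {p : A → K}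
    (hp : ∀ i, p i ≠ 0) (k : ℕ) :
    (∏ i, p i) * stepSum e p k = runSum e p k :=
  (prod_mul_stepSum_eq_sum_labelling hp k).trans (sum_labelling_eq_runSum e p k)

lemma stepSum_neg {e : A} {p : A → K}
    (hp : ∀ i, p i ≠ 0) (k : ℕ) : stepSum (-e) p k = stepSum e p k := by
  refine mul_left_cancel₀ (Finset.prod_ne_zero_iff.2 fun i _ => hp i : (∏ i, p i) ≠ 0) ?_
  rw [prod_mul_stepSum hp,
    prod_mul_stepSum hp, runSum_neg]

end Weights

end Circle

lemma allRes_eq_univ (n : ℕ) [NeZero n] : allRes n = Finset.univ := by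
  ext i
  simpa [allRes] using ⟨i.val, ZMod.val_lt i, ZMod.natCast_zmod_val i⟩

lemma ZMod.one_ne_zero_and_two_ne_zero {n : ℕ} (hn : 3 ≤ n) :
    (1 : ZMod n) ≠ 0 ∧ (2 : ZMod n) ≠ 0 := by
  constructor
  · have := mt (ZMod.natCast_eq_zero_iff 1 n).1 (Nat.not_dvd_of_pos_of_lt one_pos (by omega))
    simpa using this
  · have := mt (ZMod.natCast_eq_zero_iff 2 n).1 (Nat.not_dvd_of_pos_of_lt two_pos (by omega))
    simpa using this

lemma admissibleO_iff {n : ℕ} (hn : 3 ≤ n) (S T : Finset (ZMod n)) :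
    AdmissibleO S T ↔ StepAdmissible 1 S T := by
  obtain ⟨h₁, h₂⟩ := ZMod.one_ne_zero_and_two_ne_zero hn
  have e₁ (i : ZMod n) : i + 1 + 1 = i + 2 := by ring
  rw [stepAdmissible_iff h₁ (by rwa [one_add_one_eq_two])]
  simp only [AdmissibleO, Finset.mem_insert, Finset.mem_singleton, not_or, sub_sub,
    one_add_one_eq_two, e₁]

lemma admissibleE_iff {n : ℕ} (hn : 3 ≤ n) (S T : Finset (ZMod n)) :
    AdmissibleE S T ↔ StepAdmissible (-1) S T := by
  obtain ⟨h₁, h₂⟩ := ZMod.one_ne_zero_and_two_ne_zero hn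
  have e₁ (i : ZMod n) : i + 1 + 1 = i + 2 := by ring
  rw [stepAdmissible_iff (neg_ne_zero.2 h₁) (by rwa [← neg_add, one_add_one_eq_two, neg_ne_zero])]
  simp only [AdmissibleE, Finset.mem_insert, Finset.mem_singleton, not_or, sub_neg_eq_add,
    ← sub_eq_add_neg, sub_sub, one_add_one_eq_two, e₁]
  refine and_congr ?_ (and_congr ?_ ?_)
  · exact forall₄_congr fun _ _ _ _ => imp_congr_right fun _ => by tauto
  · exact forall₄_congr fun _ _ _ _ => by tauto
  · exact forall₄_congr fun _ _ _ _ => imp_congr_right fun _ => by tauto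

lemma Opoly_eq_stepSum {n : ℕ} (hn : 3 ≤ n) [NeZero n] {p x y : ZMod n → ℝ}
    (hx : ∀ i, x i = (1 - p i) / p (i + 1)) (hy : ∀ i, y i = (1 - p (i + 1)) / p i) (k : ℕ) :
    Opoly x y k = stepSum 1 p k := by
  have hX (i : ZMod n) : Xmon x y i =
      (1 - p i) * (1 - p (i + 1)) ^ 2 / (p i * p (i + 1) * p (i + 1 + 1)) := by
    rw [Xmon, hx, hy, hx]
    ring
  simp only [Opoly, stepSum, allRes_eq_univ, Finset.powerset_univ, admissibleO_iff hn, hX, hx]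

lemma Epoly_eq_stepSum {n : ℕ} (hn : 3 ≤ n) [NeZero n] {p x y : ZMod n → ℝ}
    (hx : ∀ i, x i = (1 - p i) / p (i + 1)) (hy : ∀ i, y i = (1 - p (i + 1)) / p i) (k : ℕ) :
    Epoly x y k = stepSum (-1) p k := by
  have hY (i : ZMod n) : Ymon x y i = (1 - p (i + 1)) * (1 - p (i + 1 + -1)) ^ 2 /
      (p (i + 1) * p (i + 1 + -1) * p (i + 1 + -1 + -1)) := by
    have h : i + 1 + -1 = i := by ring
    rw [Ymon, hx, hy, hy, sub_add_cancel, h, ← sub_eq_add_neg]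
    ring
  have hy' (i : ZMod n) : y i = (1 - p (i + 1)) / p (i + 1 + -1) := by
    rw [hy, add_neg_cancel_right]
  simp only [Epoly, stepSum, allRes_eq_univ, Finset.powerset_univ]
  refine Fintype.sum_equiv (Equiv.addRight 1).finsetCongr _ _ fun S =>
    Fintype.sum_equiv (Equiv.addRight 1).finsetCongr _ _ fun T => ?_
  simp only [Equiv.finsetCongr_apply, admissibleE_iff hn, stepAdmissible_map_addRight,
    Finset.card_map, Finset.prod_map,
    Equiv.coe_toEmbedding, Equiv.coe_addRight, hY, hy']

/-- **Main theorem.**  For a twisted `n`-gon inscribed in a conic, with cross-ratio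
coordinates `p_i ≠ 0` and corner invariants `x_i = (1 - p_i)/p_{i+1}`,
`y_i = (1 - p_{i+1})/p_i`, one has `O_k = E_k` for every `1 ≤ k ≤ ⌊n/2⌋`. -/
theorem inscribed_Opoly_eq_Epoly (n : ℕ) (hn : 5 ≤ n) (p : ZMod n → ℝ)
    (hp : ∀ i, p i ≠ 0) (x y : ZMod n → ℝ)
    (hx : ∀ i, x i = (1 - p i) / p (i + 1))
    (hy : ∀ i, y i = (1 - p (i + 1)) / p i)
    (k : ℕ) (hk1 : 1 ≤ k) (hk2 : k ≤ n / 2) :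
    Opoly x y k = Epoly x y k := by
  have : NeZero n := ⟨by omega⟩
  rw [Opoly_eq_stepSum (by omega) hx hy, Epoly_eq_stepSum (by omega) hx hy, stepSum_neg hp]

end
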